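/- arXiv:1109.3676 — 3 statements merged into one kernel-verified Lean document; each statement's English description precedes it below -/
import Mathlib

section
/- Let β ∈ (0,2], n ∈ ℕ, define φ₁(λ) = log(1 + λ^{β/2}) and φ_{k+1} = φ₁ ∘ φ_k, and let μ_n : (0,∞) → (0,∞) be a decreasing function with φ_n(λ) = ∫_0^∞ (1 − e^{−λt}) μ_n(t) dt for all λ > 0. For an integer d ≥ 3, define j_n(r) = ∫_0^∞ (4πt)^{−d/2} e^{−r²/(4t)} μ_n(t) dt. Then j_n(r) ≍ r^{−d} · ∏_{k=1}^{n−1} (log_k(1/r))^{−1} as r → 0+ (the product being 1 when n = 1). -/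
open MeasureTheory Set Filter Topology

/-- Iterated geometric stable Laplace exponents: `phiIter β 1 λ = log(1 + λ^{β/2})` and
`phiIter β (n+1) = phiIter β 1 ∘ phiIter β n`. -/
noncomputable def phiIter (β : ℝ) : ℕ → ℝ → ℝ
  | 0, l => l
  | n + 1, l => Real.log (1 + phiIter β n l ^ (β / 2))

/-- Iterated logarithms: `iterLog 1 = log`, `iterLog (k+1) = log ∘ iterLog k`. -/
noncomputable def iterLog : ℕ → ℝ → ℝ
  | 0, x => x
  | n + 1, x => Real.log (iterLog n x)


lemma phiIter_pos {β : ℝ} (hβ0 : 0 < β) (n : ℕ) (l : ℝ) (hl : 0 < l) : 0 < phiIter β n l := by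
  induction n with
  | zero => simpa [phiIter] using hl
  | succ n ih =>
    have : 0 < phiIter β n l ^ (β / 2) := Real.rpow_pos_of_pos ih _
    simp only [phiIter]
    exact Real.log_pos (by linarith)

lemma iterLog_tendsto (n : ℕ) : Tendsto (iterLog n) atTop atTop := by
  induction n with
  | zero => exact tendsto_id
  | succ n ih => exact Real.tendsto_log_atTop.comp ih

lemma iterLog_mono (n : ℕ) : ∃ A : ℝ, ∀ x y, A ≤ x → x ≤ y → iterLog n x ≤ iterLog n y := by
  induction n with
  | zero => exact ⟨0, fun x y _ h => h⟩
  | succ n ih =>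
    obtain ⟨A, hA⟩ := ih
    obtain ⟨B, hB⟩ := eventually_atTop.1 ((iterLog_tendsto n).eventually_ge_atTop 1)
    refine ⟨max A B, fun x y hx hxy => ?_⟩
    have h1 := hA x y ((le_max_left _ _).trans hx) hxy
    have h2 := hB x ((le_max_right _ _).trans hx)
    exact Real.log_le_log (by linarith) h1

lemma iterLog_sq (n : ℕ) : ∀ᶠ x in atTop, iterLog (n+1) (x ^ 2) ≤ 2 * iterLog (n+1) x := by
  induction n with
  | zero =>
    refine Eventually.of_forall fun x => ?_
    simp [iterLog, Real.log_pow]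
  | succ n ih =>
    have hsq : Tendsto (fun x : ℝ => x ^ 2) atTop atTop := tendsto_pow_atTop (by norm_num)
    filter_upwards [ih, (iterLog_tendsto (n+1)).eventually_ge_atTop 2,
      ((iterLog_tendsto (n+1)).comp hsq).eventually_ge_atTop 1] with x h1 h2 h3
    have h3' : 1 ≤ iterLog (n+1) (x^2) := h3
    show Real.log (iterLog (n+1) (x^2)) ≤ 2 * Real.log (iterLog (n+1) x)
    calc Real.log (iterLog (n+1) (x^2)) ≤ Real.log ((iterLog (n+1) x)^2) := by
          apply Real.log_le_log (by linarith); nlinarith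
      _ = _ := by rw [Real.log_pow]; norm_num

lemma iterLog_le_log (n : ℕ) : ∀ᶠ x in atTop, iterLog (n+1) x ≤ Real.log x := by
  induction n with
  | zero => exact Eventually.of_forall fun x => le_rfl
  | succ n ih =>
    filter_upwards [ih, (iterLog_tendsto (n+1)).eventually_ge_atTop 1] with x h1 h2
    refine le_trans ?_ h1
    show Real.log (iterLog (n+1) x) ≤ _
    exact Real.log_le_self (by linarith)

noncomputable def Pf (m : ℕ) (x : ℝ) : ℝ := ∏ k ∈ Finset.range m, iterLog (k+1) x

lemma Pf_eq (m : ℕ) (x : ℝ) : ∏ k ∈ Finset.Icc 1 m, (iterLog k x)⁻¹ = (Pf m x)⁻¹ := by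
  induction m with
  | zero => simp [Pf]
  | succ m ih =>
    rw [Finset.prod_Icc_succ_top (by omega), ih, Pf, Pf, Finset.prod_range_succ, mul_inv]

lemma Pf_ge_one (m : ℕ) : ∀ᶠ x in atTop, 1 ≤ Pf m x := by
  induction m with
  | zero => exact Eventually.of_forall fun x => by simp [Pf]
  | succ m ih =>
    filter_upwards [ih, (iterLog_tendsto (m+1)).eventually_ge_atTop 1] with x h1 h2
    rw [Pf, Finset.prod_range_succ]
    exact one_le_mul_of_one_le_of_one_le h1 h2

lemma Pf_mono (m : ℕ) : ∃ A : ℝ, ∀ x y, A ≤ x → x ≤ y → Pf m x ≤ Pf m y := by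
  induction m with
  | zero => exact ⟨0, fun x y _ _ => by simp [Pf]⟩
  | succ m ih =>
    obtain ⟨A, hA⟩ := ih
    obtain ⟨A', hA'⟩ := iterLog_mono (m+1)
    obtain ⟨B, hB⟩ := eventually_atTop.1 ((iterLog_tendsto (m+1)).eventually_ge_atTop 1)
    obtain ⟨B', hB'⟩ := eventually_atTop.1 (Pf_ge_one m)
    refine ⟨max (max A A') (max B B'), fun x y hx hxy => ?_⟩
    simp only [max_le_iff] at hx
    have h1 := hA x y hx.1.1 hxy
    have h2 := hA' x y hx.1.2 hxy
    have h3 := hB x hx.2.1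
    have h4 := hB' x hx.2.2
    rw [Pf, Pf, Finset.prod_range_succ, Finset.prod_range_succ]
    rw [Pf] at h1 h4
    rw [Pf] at h1
    have h5 := h4.trans h1
    have h6 : (0:ℝ) ≤ ∏ k ∈ Finset.range m, iterLog (k + 1) y := by linarith
    gcongr

lemma Pf_sq (m : ℕ) : ∀ᶠ x in atTop, Pf m (x^2) ≤ 2 ^ m * Pf m x := by
  induction m with
  | zero => exact Eventually.of_forall fun x => by simp [Pf]
  | succ m ih =>
    have hsq : Tendsto (fun x : ℝ => x ^ 2) atTop atTop := tendsto_pow_atTop (by norm_num)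
    filter_upwards [ih, iterLog_sq m, ((iterLog_tendsto (m+1)).comp hsq).eventually_ge_atTop 1,
      Pf_ge_one m] with x h1 h2 h3 h4
    have h3' : 1 ≤ iterLog (m+1) (x^2) := h3
    have e : ∀ z, Pf (m+1) z = Pf m z * iterLog (m+1) z := fun z => by
      rw [Pf, Finset.prod_range_succ, Pf]
    rw [e, e]
    calc _ ≤ (2 ^ m * Pf m x) * (2 * iterLog (m+1) x) := by gcongr
      _ = _ := by ring

lemma Pf_le (m : ℕ) : ∀ᶠ x in atTop, Pf m x ≤ x := by
  have h : ∀ᶠ x in atTop, Pf m x ≤ Real.log x ^ m := by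
    induction m with
    | zero => exact Eventually.of_forall fun x => by simp [Pf]
    | succ m ih =>
      filter_upwards [ih, iterLog_le_log m, (iterLog_tendsto (m+1)).eventually_ge_atTop 1,
        Pf_ge_one m, Real.tendsto_log_atTop.eventually_ge_atTop 1] with x h1 h2 h3 h4 h5
      rw [Pf] at h1 h4
      rw [Pf, Finset.prod_range_succ, pow_succ]
      gcongr
  have h2 := (Real.isLittleO_pow_log_id_atTop (n := m)).bound (c := 1) one_pos
  filter_upwards [h, h2, eventually_ge_atTop 1] with x h1 h2 h3
  simp only [Real.norm_eq_abs, id, one_mul] at h2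
  rw [abs_of_pos (by linarith : (0:ℝ) < x)] at h2
  exact h1.trans ((le_abs_self _).trans h2)

lemma phi_asymp {β : ℝ} (hβ0 : 0 < β) (hβ2 : β ≤ 2) (n : ℕ) :
    ∃ c C : ℝ, 0 < c ∧ 0 < C ∧ ∀ᶠ x in atTop, c * iterLog n x ≤ phiIter β n x ∧
      phiIter β n x ≤ C * iterLog n x := by
  induction n with
  | zero => exact ⟨1, 1, one_pos, one_pos, Eventually.of_forall fun x => by simp [phiIter, iterLog]⟩
  | succ n ih =>
    obtain ⟨c, C, hc, hC, h⟩ := ih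
    refine ⟨β/2 * (1/2), 2, by positivity, by norm_num, ?_⟩
    filter_upwards [h, (iterLog_tendsto n).eventually_ge_atTop (1 + C),
      (iterLog_tendsto n).eventually_ge_atTop (1 / c),
      (iterLog_tendsto n).eventually_ge_atTop (1 / c^2)] with x h1 h2 h3 h4
    set L := iterLog n x
    set f := phiIter β n x with hf
    have hL1 : 1 ≤ L := by linarith
    have hcL : 1 ≤ c * L := by rw [div_le_iff₀ hc] at h3; linarith
    have hcL2 : 1 ≤ c^2 * L := by rw [div_le_iff₀ (by positivity)] at h4; linarith
    have hf1 : 1 ≤ f := by linarith [h1.1]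
    have e : phiIter β (n+1) x = Real.log (1 + f ^ (β/2)) := rfl
    have e2 : iterLog (n+1) x = Real.log L := rfl
    rw [e, e2]
    have hp : 0 < f ^ (β/2) := Real.rpow_pos_of_pos (by linarith) _
    constructor
    · calc β/2 * (1/2) * Real.log L ≤ β/2 * Real.log f := by
            rw [mul_assoc]
            gcongr
            have : Real.log L ≤ Real.log (f^2) := by
              apply Real.log_le_log (by linarith)
              nlinarith [h1.1]
            rw [Real.log_pow] at this
            push_cast at this
            linarith
        _ = Real.log (f ^ (β/2)) := by rw [Real.log_rpow (by linarith)]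
        _ ≤ _ := Real.log_le_log hp (by linarith)
    · have h5 : f ^ (β/2) ≤ f := by
        calc _ ≤ f ^ (1:ℝ) := Real.rpow_le_rpow_of_exponent_le hf1 (by linarith)
          _ = f := Real.rpow_one f
      calc _ ≤ Real.log (L^2) := by
            apply Real.log_le_log (by linarith)
            nlinarith [h1.2]
        _ = _ := by rw [Real.log_pow]; norm_num

lemma phi_deriv {β : ℝ} (hβ0 : 0 < β) (hβ2 : β ≤ 2) (n : ℕ) :
    ∃ c C : ℝ, 0 < c ∧ 0 < C ∧ ∀ᶠ x in atTop, ∃ y, HasDerivAt (phiIter β (n+1)) y x ∧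
      c / (x * Pf n x) ≤ y ∧ y ≤ C / (x * Pf n x) := by

  have step : ∀ (m : ℕ) (x y : ℝ), 1 ≤ phiIter β m x → HasDerivAt (phiIter β m) y x → 0 ≤ y →
      ∃ z, HasDerivAt (phiIter β (m+1)) z x ∧ β / 4 * (y / phiIter β m x) ≤ z ∧
        z ≤ β / 2 * (y / phiIter β m x) := by
    intro m x y h1 hd hy
    have hpos : 0 < phiIter β m x := by linarith
    have hd2 := ((hd.rpow_const (p := β/2) (Or.inl hpos.ne')).const_add 1).log
      (by have := Real.rpow_pos_of_pos hpos (β/2); positivity)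
    refine ⟨_, hd2, ?_⟩
    set f := phiIter β m x
    have hw1 : 1 ≤ f ^ (β/2) := Real.one_le_rpow h1 (by positivity)
    rw [Real.rpow_sub_one hpos.ne']
    set w := f ^ (β/2)
    have e : y * (β/2) * (w / f) / (1 + w) = β / 2 * (y / f) * (w / (1+w)) := by
      field_simp
    rw [e]
    have hq : 0 ≤ y / f := by positivity
    constructor
    · have : 1/2 ≤ w / (1+w) := by rw [div_le_div_iff₀] <;> linarith
      calc β / 4 * (y / f) = β / 2 * (y/f) * (1/2) := by ring
        _ ≤ _ := by gcongr
    · have : w / (1+w) ≤ 1 := by rw [div_le_one] <;> linarith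
      calc _ ≤ β / 2 * (y/f) * 1 := by gcongr
        _ = _ := by ring
  induction n with
  | zero =>
    refine ⟨β/4, β/2, by positivity, by positivity, ?_⟩
    filter_upwards [eventually_ge_atTop 1] with x hx
    obtain ⟨z, h1, h2, h3⟩ := step 0 x 1 (by simpa [phiIter] using hx) (by
      exact hasDerivAt_id x) zero_le_one
    refine ⟨z, h1, ?_, ?_⟩
    · simpa [Pf, phiIter, div_eq_mul_inv] using h2
    · simpa [Pf, phiIter, div_eq_mul_inv] using h3
  | succ n ih =>
    obtain ⟨c, C, hc, hC, h⟩ := ih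
    obtain ⟨a, A, ha, hA, h'⟩ := phi_asymp hβ0 hβ2 (n+1)
    refine ⟨β/4 * (c / A), β/2 * (C / a), by positivity, by positivity, ?_⟩
    filter_upwards [h, h', (iterLog_tendsto (n+1)).eventually_ge_atTop (1 / a),
      (iterLog_tendsto (n+1)).eventually_ge_atTop 1,
      eventually_ge_atTop 1, Pf_ge_one n] with x ⟨y, hy, hy1, hy2⟩ h2 h3 h3' h4 h5
    have hf1 : 1 ≤ phiIter β (n+1) x := by
      rw [div_le_iff₀ ha] at h3; linarith [h2.1]
    have hy0 : 0 ≤ y := le_trans (by positivity) hy1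
    obtain ⟨z, hz, hz1, hz2⟩ := step (n+1) x y hf1 hy hy0
    refine ⟨z, hz, le_trans ?_ hz1, hz2.trans ?_⟩
    · have e : Pf (n+1) x = Pf n x * iterLog (n+1) x := by
        rw [Pf, Finset.prod_range_succ, Pf]
      rw [e]
      calc _ = β/4 * ((c / (x * Pf n x)) / (A * iterLog (n+1) x)) := by field_simp
        _ ≤ _ := by gcongr; exact h2.2
    · have e : Pf (n+1) x = Pf n x * iterLog (n+1) x := by
        rw [Pf, Finset.prod_range_succ, Pf]
      rw [e]
      calc _ ≤ β/2 * ((C / (x * Pf n x)) / (a * iterLog (n+1) x)) := by gcongr; exact h2.1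
        _ = _ := by field_simp

lemma phi_diff {β : ℝ} (hβ0 : 0 < β) (hβ2 : β ≤ 2) (n : ℕ) :
    ∃ c C : ℝ, 0 < c ∧ 0 < C ∧ ∀ᶠ x in atTop,
      c / Pf n x ≤ phiIter β (n+1) (2*x) - phiIter β (n+1) x ∧
      phiIter β (n+1) (2*x) - phiIter β (n+1) x ≤ C / Pf n x := by
  obtain ⟨c, C, hc, hC, h⟩ := phi_deriv hβ0 hβ2 n
  obtain ⟨B, hB⟩ := eventually_atTop.1 h
  obtain ⟨A, hA⟩ := Pf_mono n
  obtain ⟨B', hB'⟩ := eventually_atTop.1 (Pf_ge_one n)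
  refine ⟨c / (2 * 2 ^ n), C, by positivity, hC, ?_⟩
  filter_upwards [eventually_ge_atTop B, eventually_ge_atTop A, eventually_ge_atTop B',
    Pf_sq n, eventually_ge_atTop 2] with x h1 h2 h3 h4 h5
  choose! y hy using hB
  obtain ⟨ξ, hξ, e⟩ := exists_hasDerivAt_eq_slope (phiIter β (n+1)) y (a := x) (b := 2*x)
    (by linarith) (fun z hz => (hy z (h1.trans hz.1)).1.continuousAt.continuousWithinAt)
    (fun z hz => (hy z (h1.trans hz.1.le)).1)
  have e' : phiIter β (n+1) (2*x) - phiIter β (n+1) x = y ξ * x := by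
    rw [e]; field_simp; ring
  rw [e']
  obtain ⟨_, hb1, hb2⟩ := hy ξ (h1.trans hξ.1.le)
  have p1 := hB' x h3
  have p2 := hB' ξ (h3.trans hξ.1.le)
  have m1 := hA x ξ h2 hξ.1.le
  have m2 := hA ξ (x^2) (h2.trans hξ.1.le) (by nlinarith [hξ.2])
  have hξ1 := hξ.1
  have hξ2 := hξ.2
  constructor
  · calc c / (2 * 2 ^ n) / Pf n x = c / ((2 * x) * (2 ^ n * Pf n x)) * x := by field_simp
      _ ≤ c / (ξ * Pf n ξ) * x := by
        have : 0 < ξ := by linarith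
        gcongr
        exact m2.trans h4
      _ ≤ _ := by gcongr
  · have : 0 < ξ := by linarith
    calc y ξ * x ≤ C / (ξ * Pf n ξ) * x := by gcongr
      _ ≤ C / (x * Pf n x) * x := by gcongr
      _ = _ := by field_simp

lemma const_le_integral {f : ℝ → ℝ} (hf : IntegrableOn f (Ioi 0)) (h0 : ∀ t, 0 < t → 0 ≤ f t)
    {a b m : ℝ} (ha : 0 ≤ a) (hab : a ≤ b) (hm : ∀ t, a < t → t ≤ b → m ≤ f t) :
    m * (b - a) ≤ ∫ t in Ioi (0:ℝ), f t := by
  have hsub : Ioc a b ⊆ Ioi (0:ℝ) := fun t ht => lt_of_le_of_lt ha ht.1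
  calc m * (b - a) = ∫ t in Ioc a b, m := by
        simp [hab, mul_comm]
    _ ≤ ∫ t in Ioc a b, f t := by
        refine setIntegral_mono_on ?_ (hf.mono_set hsub) measurableSet_Ioc fun t ht => hm t ht.1 ht.2
        exact integrableOn_const (by simp)
    _ ≤ _ := by
        refine setIntegral_mono_set hf ?_ hsub.eventuallyLE
        exact (ae_restrict_iff' measurableSet_Ioi).2 (Eventually.of_forall fun t ht => h0 t ht)

lemma mu_bounds (φ μ P : ℝ → ℝ) (hμpos : ∀ t, 0 < t → 0 < μ t)
    (hμdec : ∀ s t, 0 < s → s ≤ t → μ t ≤ μ s)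
    (hInt : ∀ l, 0 < l → IntegrableOn (fun t => (1 - Real.exp (-(l * t))) * μ t) (Ioi 0))
    (hφ : ∀ l, 0 < l → φ l = ∫ t in Ioi (0:ℝ), (1 - Real.exp (-(l * t))) * μ t)
    (B : ℝ) (hB : 1 ≤ B) (hP1 : ∀ x, B ≤ x → 1 ≤ P x)
    (hPm : ∀ x y, B ≤ x → x ≤ y → P x ≤ P y)
    (c C : ℝ) (hc : 0 < c) (hC : 0 < C)
    (hD : ∀ x, B ≤ x → c / P x ≤ φ (2 * x) - φ x ∧ φ (2 * x) - φ x ≤ C / P x) :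
    ∃ a A t₀ : ℝ, 0 < a ∧ 0 < A ∧ 0 < t₀ ∧ ∀ t, 0 < t → t ≤ t₀ →
      B ≤ 1 / t ∧ a / (t * P (1 / t)) ≤ μ t ∧ μ t ≤ A / (t * P (1 / t)) := by
  have hDint : ∀ l, 0 < l →
      IntegrableOn (fun t => (Real.exp (-(l*t)) * (1 - Real.exp (-(l * t)))) * μ t) (Ioi 0) ∧
      φ (2 * l) - φ l = ∫ t in Ioi (0:ℝ), (Real.exp (-(l*t)) * (1 - Real.exp (-(l * t)))) * μ t := by
    intro l hl
    have e : (fun t => (Real.exp (-(l*t)) * (1 - Real.exp (-(l * t)))) * μ t) =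
        fun t => (1 - Real.exp (-(2 * l * t))) * μ t - (1 - Real.exp (-(l * t))) * μ t := by
      ext t
      have : Real.exp (-(2 * l * t)) = Real.exp (-(l*t)) * Real.exp (-(l*t)) := by
        rw [← Real.exp_add]; ring_nf
      rw [this]; ring
    rw [e]
    refine ⟨(hInt (2*l) (by linarith)).sub (hInt l hl), ?_⟩
    rw [integral_sub (hInt (2*l) (by linarith)) (hInt l hl), hφ _ hl, hφ (2*l) (by linarith)]
  have hexpone : ∀ l t : ℝ, 0 < l → 0 < t → 0 ≤ 1 - Real.exp (-(l * t)) := by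
    intro l t hl ht
    have : Real.exp (-(l*t)) ≤ 1 := Real.exp_le_one_iff.2 (by nlinarith [mul_pos hl ht])
    linarith
  have hnn : ∀ l t : ℝ, 0 < l → 0 < t →
      0 ≤ (Real.exp (-(l*t)) * (1 - Real.exp (-(l * t)))) * μ t := by
    intro l t hl ht
    exact mul_nonneg (mul_nonneg (Real.exp_pos _).le (hexpone l t hl ht)) (hμpos t ht).le
  set κ := Real.exp (-1) * (1 - Real.exp (-(1/2))) with hκ
  have hκ0 : 0 < κ := by
    have : Real.exp (-(1/2)) < 1 := Real.exp_lt_one_iff.2 (by norm_num)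
    exact mul_pos (Real.exp_pos _) (by linarith)

  have hup : ∀ t, 0 < t → B ≤ 1 / t → t * μ t ≤ (2 * C / κ) / P (1/t) := by
    intro t ht hBt
    have hl : 0 < 1 / t := by positivity
    obtain ⟨hi, he⟩ := hDint (1/t) hl
    have h1 := const_le_integral hi (fun s hs => hnn _ s hl hs) (a := t/2) (b := t) (m := κ * μ t)
      (by positivity) (by linarith) (by
        intro s hs1 hs2
        have hs0 : 0 < s := by linarith
        have h2 : 1 / t * s ≤ 1 := by rw [one_div_mul_eq_div, div_le_one ht]; exact hs2
        have h3 : 1 / 2 ≤ 1 / t * s := by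
          rw [one_div_mul_eq_div, le_div_iff₀ ht]; linarith
        have h4 : Real.exp (-1) ≤ Real.exp (-(1/t*s)) := Real.exp_le_exp.2 (by linarith)
        have h5 : Real.exp (-(1/t*s)) ≤ Real.exp (-(1/2)) := Real.exp_le_exp.2 (by linarith)
        have h6 := hμdec s t hs0 hs2
        have h7 := hμpos t ht
        have h8 : 0 ≤ 1 - Real.exp (-(1/2)) := by
          have : Real.exp (-(1/2)) < 1 := Real.exp_lt_one_iff.2 (by norm_num)
          linarith
        have h9 : Real.exp (-1) * (1 - Real.exp (-(1/2))) ≤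
            Real.exp (-(1/t*s)) * (1 - Real.exp (-(1/t*s))) := by gcongr
        exact mul_le_mul h9 h6 h7.le (mul_nonneg (Real.exp_pos _).le (hexpone _ _ hl hs0)))
    rw [← he] at h1
    have h2 := h1.trans (hD _ hBt).2
    have hP := hP1 _ hBt
    rw [le_div_iff₀ (by linarith)] at h2 ⊢
    rw [le_div_iff₀ hκ0]
    linarith
  set A := 2 * C / κ with hA
  have hA0 : 0 < A := by positivity
  set ε := min 1 (c / (2 * A)) with hε
  have hε0 : 0 < ε := by positivity
  have hε1 : ε ≤ 1 := min_le_left _ _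
  have hεA : ε * A ≤ c / 2 := by
    have : ε ≤ c / (2 * A) := min_le_right _ _
    calc ε * A ≤ c / (2 * A) * A := by gcongr
      _ = c / 2 := by field_simp
  have hlow : ∀ l, B ≤ l → l * (c / 2 / P l) ≤ μ (ε / l) := by
    intro l hBl
    have hl : 0 < l := by linarith
    obtain ⟨hi, he⟩ := hDint l hl
    have hs0 : 0 < ε / l := by positivity
    have hPl := hP1 l hBl
    have hun : Ioc 0 (ε/l) ∪ Ioi (ε/l) = Ioi (0:ℝ) := Ioc_union_Ioi_eq_Ioi hs0.le
    have hi1 := hi.mono_set (Ioc_subset_Ioi_self : Ioc 0 (ε/l) ⊆ Ioi 0)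
    have hi2 := hi.mono_set (Ioi_subset_Ioi hs0.le)
    rw [← hun, setIntegral_union (Set.Ioc_disjoint_Ioi le_rfl) measurableSet_Ioi hi1 hi2] at he
    have b1 : ∫ t in Ioc 0 (ε/l), (Real.exp (-(l*t)) * (1 - Real.exp (-(l * t)))) * μ t
        ≤ ε * A / P l := by
      calc _ ≤ ∫ t in Ioc 0 (ε/l), l * (A / P l) := by
            refine setIntegral_mono_on hi1 (integrableOn_const (by simp)) measurableSet_Ioc ?_
            intro t ht
            have ht0 := ht.1
            have hlt : l ≤ 1 / t := by
              rw [le_div_iff₀ ht0]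
              have := ht.2
              rw [le_div_iff₀ hl] at this
              linarith
            have q1 := hup t ht0 (hBl.trans hlt)
            have q2 := hPm l (1/t) hBl hlt
            have q3 : A / P (1/t) ≤ A / P l := by gcongr
            have q4 : Real.exp (-(l*t)) * (1 - Real.exp (-(l*t))) ≤ l * t := by
              have r1 : Real.exp (-(l*t)) ≤ 1 := by linarith [hexpone l t hl ht0]
              have r2 := Real.add_one_le_exp (-(l*t))
              calc _ ≤ 1 * (1 - Real.exp (-(l*t))) := by
                    exact mul_le_mul_of_nonneg_right r1 (hexpone l t hl ht0)
                _ ≤ _ := by linarith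
            have q5 := hμpos t ht0
            calc _ ≤ l * t * μ t := by gcongr
              _ = l * (t * μ t) := by ring
              _ ≤ _ := mul_le_mul_of_nonneg_left (q1.trans q3) hl.le
        _ = _ := by
            simp [hs0.le]
            field_simp
    have b2 : ∫ t in Ioi (ε/l), (Real.exp (-(l*t)) * (1 - Real.exp (-(l * t)))) * μ t
        ≤ μ (ε/l) / l := by
      have hei : IntegrableOn (fun t => Real.exp (-l * t)) (Ioi (ε/l)) :=
        integrableOn_exp_mul_Ioi (by linarith) _
      calc _ ≤ ∫ t in Ioi (ε/l), Real.exp (-l*t) * μ (ε/l) := by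
            refine setIntegral_mono_on hi2 (hei.mul_const _) measurableSet_Ioi ?_
            intro t ht
            have ht' : ε / l < t := ht
            have ht0 : 0 < t := by linarith
            have := hμdec (ε/l) t hs0 ht'.le
            have h7 := hμpos t ht0
            have h8 := Real.exp_pos (-(l*t))
            have e1 : Real.exp (-l*t) = Real.exp (-(l*t)) := by ring_nf
            rw [e1]
            have h9 : Real.exp (-(l*t)) * (1 - Real.exp (-(l*t))) ≤ Real.exp (-(l*t)) := by nlinarith
            gcongr
        _ = (Real.exp (-ε) / l) * μ (ε/l) := by
            rw [integral_mul_const, integral_exp_mul_Ioi (by linarith)]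
            congr 1
            rw [neg_div_neg_eq]
            congr 2
            field_simp
        _ ≤ 1 / l * μ (ε / l) := by
            have := hμpos _ hs0
            have h5 : Real.exp (-ε) ≤ 1 := Real.exp_le_one_iff.2 (by linarith)
            gcongr
        _ = _ := by ring
    have h1 := (hD l hBl).1
    have h2 : c / P l ≤ c / 2 / P l + μ (ε/l)/l := by
      have : ε * A / P l ≤ c / 2 / P l := by gcongr
      linarith
    have h3 : c / 2 / P l ≤ μ (ε/l) / l := by
      have : c / P l = c / 2 / P l + c / 2 / P l := by ring
      linarith
    rw [le_div_iff₀ hl] at h3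
    linarith
  refine ⟨ε * c / 2, A, ε / B, by positivity, hA0, by positivity, fun t ht htt => ?_⟩
  have hBε : B ≤ ε / t := by
    rw [le_div_iff₀ (by linarith)] at htt
    rw [le_div_iff₀ ht]; linarith
  have hεt : ε / t ≤ 1 / t := by gcongr
  have hBt := hBε.trans hεt
  have p1 := hP1 _ hBt
  have p2 := hP1 _ hBε
  refine ⟨hBt, ?_, ?_⟩
  · have h := hlow _ hBε
    have e : ε / (ε / t) = t := by field_simp
    rw [e] at h
    refine le_trans ?_ h
    have h2 := hPm _ _ hBε hεt
    calc ε * c / 2 / (t * P (1/t)) = ε / t * (c / 2 / P (1/t)) := by field_simp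
      _ ≤ _ := by gcongr
  · have := hup t ht hBt
    rw [le_div_iff₀ (by positivity)] at this ⊢
    linarith

lemma piece_bound {F g : ℝ → ℝ} {s : Set ℝ} (hs : MeasurableSet s)
    (hF : AEStronglyMeasurable F (volume.restrict s)) (hg : IntegrableOn g s)
    (h0 : ∀ t ∈ s, 0 ≤ F t) (h : ∀ t ∈ s, F t ≤ g t) :
    IntegrableOn F s ∧ ∫ t in s, F t ≤ ∫ t in s, g t := by
  have hi : IntegrableOn F s := by
    refine Integrable.mono' hg hF ?_
    refine (ae_restrict_iff' hs).2 (Eventually.of_forall fun t ht => ?_)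
    rw [Real.norm_eq_abs, abs_of_nonneg (h0 t ht)]
    exact h t ht
  exact ⟨hi, setIntegral_mono_on hi hg hs h⟩

lemma j_bounds (μ P : ℝ → ℝ) (hμpos : ∀ t, 0 < t → 0 < μ t)
    (hμdec : ∀ s t, 0 < s → s ≤ t → μ t ≤ μ s)
    (B : ℝ) (hB : 1 ≤ B) (hP1 : ∀ x, B ≤ x → 1 ≤ P x)
    (hPm : ∀ x y, B ≤ x → x ≤ y → P x ≤ P y)
    (K : ℝ) (hK : 0 < K) (hPsq : ∀ x, B ≤ x → P (x ^ 2) ≤ K * P x)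
    (hPle : ∀ x, B ≤ x → P x ≤ x)
    (a A t₀ : ℝ) (ha : 0 < a) (hA : 0 < A) (ht₀ : 0 < t₀)
    (hμ : ∀ t, 0 < t → t ≤ t₀ →
      B ≤ 1 / t ∧ a / (t * P (1 / t)) ≤ μ t ∧ μ t ≤ A / (t * P (1 / t)))
    (d : ℕ) (hd : 3 ≤ d) :
    ∃ c C r₀ : ℝ, 0 < c ∧ c ≤ C ∧ 0 < r₀ ∧ ∀ r, 0 < r → r < r₀ →
      c * (r ^ (-(d:ℝ)) * (P (1 / r))⁻¹) ≤
        (∫ t in Ioi (0:ℝ), (4 * Real.pi * t) ^ (-(d:ℝ) / 2) * Real.exp (-(r ^ 2 / (4 * t))) * μ t) ∧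
      (∫ t in Ioi (0:ℝ), (4 * Real.pi * t) ^ (-(d:ℝ) / 2) * Real.exp (-(r ^ 2 / (4 * t))) * μ t) ≤
        C * (r ^ (-(d:ℝ)) * (P (1 / r))⁻¹) := by
  have hd' : (3:ℝ) ≤ d := by exact_mod_cast hd
  set p : ℝ := (d:ℝ) / 2 with hp
  have hp1 : 3/2 ≤ p := by rw [hp]; linarith
  have hpe : -(d:ℝ) / 2 = -p := by rw [hp]; ring
  have hpd : (d:ℝ) = 2 * p := by rw [hp]; ring
  rw [hpe]
  have hμm : AEMeasurable μ (volume.restrict (Ioi 0)) :=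
    aemeasurable_restrict_of_antitoneOn measurableSet_Ioi fun x hx y _ hxy => hμdec x y hx hxy
  set M : ℝ := 4 ^ (d+1) * ((d+1).factorial : ℝ) with hM
  have hM0 : 0 < M := by positivity
  have hπ := Real.pi_gt_three
  set c₀ : ℝ := (8 * Real.pi) ^ (-p) * Real.exp (-1) * (a / (2 * K)) with hc₀
  have hc₀0 : 0 < c₀ := by positivity
  refine ⟨c₀, max c₀ ((M + 3) * A), min (t₀ / 2) (1 / (2 * B)), hc₀0, le_max_left _ _,
    by positivity, fun r hr hrr => ?_⟩
  have hr1 : r < t₀ / 2 := lt_of_lt_of_le hrr (min_le_left _ _)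
  have hr2 : r < 1 / (2 * B) := lt_of_lt_of_le hrr (min_le_right _ _)
  have hr3 : r ≤ 1 / 2 := hr2.le.trans (by gcongr; linarith)
  have hrt : r ≤ t₀ := by linarith
  have hr22 : 2 * r ^ 2 ≤ r := by nlinarith
  have hrB : B ≤ 1 / r := (hμ r hr hrt).1
  have hPr := hP1 _ hrB
  have hrsq : ∀ q : ℝ, (r ^ 2) ^ q = r ^ (2 * q) := fun q => by
    rw [← Real.rpow_natCast, ← Real.rpow_mul hr.le]; norm_num
  set F : ℝ → ℝ := fun t => (4 * Real.pi * t) ^ (-p) * Real.exp (-(r ^ 2 / (4 * t))) * μ t with hF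
  have hF0 : ∀ t, 0 < t → 0 ≤ F t := by
    intro t ht
    have := hμpos t ht
    simp only [hF]; positivity
  have hFm : AEStronglyMeasurable F (volume.restrict (Ioi 0)) := by
    refine AEMeasurable.aestronglyMeasurable ?_
    refine AEMeasurable.mul (Measurable.aemeasurable ?_) hμm
    fun_prop
  have hFm' : ∀ s : Set ℝ, s ⊆ Ioi 0 → AEStronglyMeasurable F (volume.restrict s) :=
    fun s hs => hFm.mono_measure (Measure.restrict_mono_set _ hs)
  have hpi : ∀ t, 0 < t → (4 * Real.pi * t) ^ (-p) ≤ t ^ (-p) := by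
    intro t ht
    exact Real.rpow_le_rpow_of_nonpos ht (by nlinarith) (by linarith)
  have hFle : ∀ t E X, 0 < t → Real.exp (-(r ^ 2 / (4 * t))) ≤ E → μ t ≤ X →
      F t ≤ t ^ (-p) * E * X := by
    intro t E X ht hE hX
    have h0 : 0 ≤ t ^ (-p) := Real.rpow_nonneg ht.le _
    have hE0 : 0 ≤ E := (Real.exp_pos _).le.trans hE
    exact mul_le_mul (mul_le_mul (hpi t ht) hE (Real.exp_pos _).le h0) hX (hμpos t ht).le
      (mul_nonneg h0 hE0)
  have hexpone : ∀ t, 0 < t → Real.exp (-(r ^ 2 / (4 * t))) ≤ 1 := by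
    intro t ht
    exact Real.exp_le_one_iff.2 (by rw [neg_nonpos]; positivity)
  set S := A / P (1/r) with hS
  have hS0 : 0 < S := by positivity
  have hμS : ∀ t, 0 < t → t ≤ r → μ t ≤ S / t := by
    intro t ht htr
    obtain ⟨_, _, h3⟩ := hμ t ht (htr.trans hrt)
    have h4 := hPm (1/r) (1/t) hrB (by gcongr)
    calc μ t ≤ A / (t * P (1/t)) := h3
      _ ≤ A / (t * P (1/r)) := by gcongr
      _ = S / t := by rw [hS]; field_simp
  have hr2pos : 0 < r ^ 2 := by positivity

  have R1 := piece_bound (F := F) (g := fun _ => M * S * (r^2) ^ (-(p+1))) (s := Ioc 0 (r^2))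
    measurableSet_Ioc (hFm' _ Ioc_subset_Ioi_self) (integrableOn_const (by simp))
    (fun t ht => hF0 t ht.1) (by
      intro t ht
      have ht0 := ht.1
      have htr := ht.2
      have h1 : Real.exp (-(r^2/(4*t))) ≤ M * (t / r^2) ^ (p+1) := by
        set x := r^2/(4*t) with hx
        have hx0 : 0 < x := by positivity
        have h4x : r^2 / t = 4 * x := by rw [hx]; field_simp
        have h4x1 : 1 ≤ 4 * x := by rw [← h4x, one_le_div ht0]; exact htr
        have h2 : (4*x) ^ (p+1) ≤ M * Real.exp x := by
          calc (4*x) ^ (p+1) ≤ (4*x) ^ ((d+1 : ℕ) : ℝ) :=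
                Real.rpow_le_rpow_of_exponent_le h4x1 (by push_cast; linarith)
            _ = 4 ^ (d+1) * x ^ (d+1) := by rw [Real.rpow_natCast, mul_pow]
            _ ≤ 4 ^ (d+1) * (((d+1).factorial : ℝ) * Real.exp x) := by
                gcongr
                have := Real.pow_div_factorial_le_exp x hx0.le (d+1)
                rw [div_le_iff₀ (by positivity)] at this
                linarith
            _ = _ := by rw [hM]; ring
        have h3 : t / r^2 = (4*x)⁻¹ := by rw [← h4x, inv_div]
        rw [h3, Real.inv_rpow (by positivity), Real.exp_neg, ← div_eq_mul_inv,
          le_div_iff₀ (by positivity), inv_mul_le_iff₀ (Real.exp_pos _)]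
        linarith
      have h2 := hμS t ht0 (by nlinarith)
      have h3 := hμpos t ht0
      calc F t ≤ t ^ (-p) * (M * (t / r^2) ^ (p+1)) * (S / t) :=
            hFle t _ _ ht0 h1 h2
        _ = M * S * (r^2) ^ (-(p+1)) := by
            rw [Real.div_rpow ht0.le hr2pos.le, Real.rpow_neg hr2pos.le, Real.rpow_neg ht0.le,
              Real.rpow_add_one ht0.ne']
            have : 0 < t ^ p := Real.rpow_pos_of_pos ht0 _
            field_simp)
  have hgi : IntegrableOn (fun t => S * t ^ (-(p+1))) (Ioi (r^2)) :=
    (integrableOn_Ioi_rpow_of_lt (by linarith) hr2pos).const_mul S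
  have R2 := piece_bound (F := F) (g := fun t => S * t ^ (-(p+1))) (s := Ioc (r^2) r)
    measurableSet_Ioc (hFm' _ (fun t ht => hr2pos.trans ht.1))
    (hgi.mono_set Ioc_subset_Ioi_self)
    (fun t ht => hF0 t (hr2pos.trans ht.1)) (by
      intro t ht
      have ht0 : 0 < t := hr2pos.trans ht.1
      have h2 := hμS t ht0 ht.2
      have h3 := hμpos t ht0
      calc F t ≤ t ^ (-p) * 1 * (S / t) :=
            hFle t _ _ ht0 (hexpone t ht0) h2
        _ = S * t ^ (-(p+1)) := by
            rw [neg_add, ← sub_eq_add_neg, Real.rpow_sub_one ht0.ne']; ring)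
  have R3 := piece_bound (F := F) (g := fun t => (A / r) * t ^ (-p)) (s := Ioi r)
    measurableSet_Ioi (hFm' _ (Ioi_subset_Ioi hr.le))
    ((integrableOn_Ioi_rpow_of_lt (by linarith) hr).const_mul (A/r))
    (fun t ht => hF0 t (hr.trans ht)) (by
      intro t ht
      have ht0 : 0 < t := hr.trans ht
      have h3 := hμpos t ht0
      have h2 : μ t ≤ A / r := by
        calc μ t ≤ μ r := hμdec r t hr (le_of_lt ht)
          _ ≤ S / r := hμS r hr le_rfl
          _ ≤ A / r := by
            gcongr
            rw [hS]
            exact div_le_self hA.le hPr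
      calc F t ≤ t ^ (-p) * 1 * (A / r) :=
            hFle t _ _ ht0 (hexpone t ht0) h2
        _ = _ := by ring)
  have hu1 : Ioc (r^2) r ∪ Ioi r = Ioi (r^2) := Ioc_union_Ioi_eq_Ioi (by linarith)
  have hu2 : Ioc 0 (r^2) ∪ Ioi (r^2) = Ioi (0:ℝ) := Ioc_union_Ioi_eq_Ioi hr2pos.le
  have hi23 : IntegrableOn F (Ioi (r^2)) := by rw [← hu1]; exact R2.1.union R3.1
  have hi : IntegrableOn F (Ioi 0) := by rw [← hu2]; exact R1.1.union hi23
  constructor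
  · have hm := const_le_integral hi hF0 (a := r^2) (b := 2 * r^2)
      (m := (8 * Real.pi) ^ (-p) * r ^ (-(d:ℝ)) * Real.exp (-1) * (a / (2 * r^2 * (K * P (1/r)))))
      hr2pos.le (by linarith) (by
        intro t ht1 ht2
        have ht0 : 0 < t := by linarith
        have h1 : (8 * Real.pi) ^ (-p) * r ^ (-(d:ℝ)) ≤ (4 * Real.pi * t) ^ (-p) := by
          have e : r ^ (-(d:ℝ)) = (r^2) ^ (-p) := by rw [hrsq]; congr 1; linarith
          rw [e, ← Real.mul_rpow (by positivity) hr2pos.le]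
          exact Real.rpow_le_rpow_of_nonpos (by positivity) (by nlinarith) (by linarith)
        have h2 : Real.exp (-1) ≤ Real.exp (-(r^2/(4*t))) := by
          apply Real.exp_le_exp.2
          have : r^2/(4*t) ≤ 1 := by rw [div_le_one (by positivity)]; linarith
          linarith
        have h3 : a / (2 * r^2 * (K * P (1/r))) ≤ μ t := by
          obtain ⟨q1, q2, _⟩ := hμ (2 * r^2) (by positivity) (by linarith)
          refine le_trans ?_ (q2.trans (hμdec t _ ht0 ht2))
          have q3 := hP1 _ q1
          have q4 : P (1 / (2 * r^2)) ≤ K * P (1/r) := by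
            refine le_trans (hPm _ _ q1 ?_) (hPsq _ hrB)
            rw [one_div_pow]
            gcongr
            linarith
          gcongr
        simp only [hF]
        gcongr)
    refine le_trans (le_of_eq ?_) hm
    rw [hc₀]
    field_simp
    ring
  · rw [← hu2, setIntegral_union (Set.Ioc_disjoint_Ioi le_rfl) measurableSet_Ioi R1.1 hi23, ← hu1,
      setIntegral_union (Set.Ioc_disjoint_Ioi le_rfl) measurableSet_Ioi R2.1 R3.1]
    have I1 : ∫ t in Ioc 0 (r^2), M * S * (r^2) ^ (-(p+1)) = M * S * r ^ (-(d:ℝ)) := by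
      rw [setIntegral_const, hpd, neg_add, ← sub_eq_add_neg, Real.rpow_sub_one hr2pos.ne', hrsq]
      simp only [smul_eq_mul, Real.volume_real_Ioc_of_le hr2pos.le, sub_zero]
      field_simp
    have I2 : ∫ t in Ioc (r^2) r, S * t ^ (-(p+1)) ≤ S * r ^ (-(d:ℝ)) := by
      calc _ ≤ ∫ t in Ioi (r^2), S * t ^ (-(p+1)) := by
            refine setIntegral_mono_set hgi ?_
              Ioc_subset_Ioi_self.eventuallyLE
            refine (ae_restrict_iff' measurableSet_Ioi).2 (Eventually.of_forall fun t ht => ?_)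
            have : 0 < t := hr2pos.trans ht
            show 0 ≤ S * t ^ (-(p+1))
            positivity
        _ = S * (r ^ (-(d:ℝ)) / p) := by
            rw [integral_const_mul, integral_Ioi_rpow_of_lt (by linarith) hr2pos]
            have e : -(p+1) + 1 = -p := by ring
            rw [e, neg_div_neg_eq, hrsq, hpd, mul_neg]
        _ ≤ _ := by
            gcongr
            exact div_le_self (by positivity) (by linarith)
    have I3 : ∫ t in Ioi r, (A / r) * t ^ (-p) ≤ 2 * (S * r ^ (-(d:ℝ))) := by
      rw [integral_const_mul, integral_Ioi_rpow_of_lt (by linarith) hr]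
      have e : -r ^ (-p+1) / (-p+1) = r ^ (-p) * r / (p-1) := by
        rw [Real.rpow_add_one hr.ne', ← neg_div_neg_eq]; congr 1 <;> ring
      rw [e]
      have h1 : r ^ (-p) * r / (p-1) ≤ r ^ (-p) * r / (1/2) := by
        gcongr
        linarith
      have h2 : P (1/r) ≤ r ^ (-p) := by
        calc P (1/r) ≤ 1/r := hPle _ hrB
          _ = r ^ (-1:ℝ) := by rw [Real.rpow_neg_one, one_div]
          _ ≤ r ^ (-p) := Real.rpow_le_rpow_of_exponent_ge hr (by linarith) (by linarith)
      have e3 : r ^ (-(d:ℝ)) = r ^ (-p) * r ^ (-p) := by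
        rw [← Real.rpow_add hr]; congr 1; linarith
      calc A / r * (r ^ (-p) * r / (p-1)) ≤ A / r * (r ^ (-p) * r / (1/2)) := by gcongr
        _ = 2 * (S * (r ^ (-p) * P (1/r))) := by rw [hS]; field_simp
        _ ≤ 2 * (S * (r ^ (-p) * r ^ (-p))) := by gcongr
        _ = _ := by rw [e3]
    have hX : 0 ≤ r ^ (-(d:ℝ)) * (P (1/r))⁻¹ := by positivity
    calc _ ≤ M * S * r ^ (-(d:ℝ)) + (S * r ^ (-(d:ℝ)) + 2 * (S * r ^ (-(d:ℝ)))) := by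
          linarith [R1.2, R2.2, R3.2]
      _ = (M + 3) * A * (r ^ (-(d:ℝ)) * (P (1/r))⁻¹) := by rw [hS]; ring
      _ ≤ _ := by gcongr; exact le_max_right _ _

/-- The Lévy density of the iterated geometric stable process satisfies
`j_n(r) ≍ r^{-d} ∏_{k=1}^{n-1} (log_k(1/r))⁻¹` as `r → 0+`. -/
theorem iterated_geometric_stable_jump_asymp
    (β : ℝ) (hβ0 : 0 < β) (hβ2 : β ≤ 2)
    (n : ℕ) (hn : 1 ≤ n)
    (μn : ℝ → ℝ)
    (hμpos : ∀ t, 0 < t → 0 < μn t)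
    (hμdec : ∀ s t, 0 < s → s ≤ t → μn t ≤ μn s)
    (hμn : ∀ l, 0 < l →
      phiIter β n l = ∫ t in Ioi (0:ℝ), (1 - Real.exp (-(l * t))) * μn t)
    (d : ℕ) (hd : 3 ≤ d)
    (jn : ℝ → ℝ)
    (hj : ∀ r, 0 < r → jn r =
      ∫ t in Ioi (0:ℝ), (4 * Real.pi * t) ^ (-(d:ℝ) / 2) * Real.exp (-(r ^ 2 / (4 * t))) * μn t) :
    ∃ c C r₀ : ℝ, 0 < c ∧ c ≤ C ∧ 0 < r₀ ∧ ∀ r, 0 < r → r < r₀ →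
      c * (r ^ (-(d:ℝ)) * ∏ k ∈ Finset.Icc 1 (n - 1), (iterLog k (1 / r))⁻¹) ≤ jn r ∧
      jn r ≤ C * (r ^ (-(d:ℝ)) * ∏ k ∈ Finset.Icc 1 (n - 1), (iterLog k (1 / r))⁻¹) := by
  obtain ⟨m, rfl⟩ : ∃ m, n = m + 1 := ⟨n - 1, by omega⟩
  simp only [Nat.add_sub_cancel, Pf_eq]
  obtain ⟨c, C, hc, hC, h⟩ := phi_diff hβ0 hβ2 m
  obtain ⟨A, hA⟩ := Pf_mono m
  obtain ⟨B, hB⟩ := eventually_atTop.1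
    (((h.and (Pf_ge_one m)).and ((Pf_sq m).and (Pf_le m))).and
      ((eventually_ge_atTop A).and (eventually_ge_atTop 1)))
  have hB1 : 1 ≤ B := (hB B le_rfl).2.2
  have hAB : A ≤ B := (hB B le_rfl).2.1
  have hPm : ∀ x y, B ≤ x → x ≤ y → Pf m x ≤ Pf m y := fun x y hx hxy => hA x y (hAB.trans hx) hxy
  have hInt : ∀ l, 0 < l → IntegrableOn (fun t => (1 - Real.exp (-(l * t))) * μn t) (Ioi 0) := by
    intro l hl
    by_contra hcon
    have h1 := hμn l hl
    rw [integral_undef hcon] at h1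
    exact (phiIter_pos hβ0 (m+1) l hl).ne' h1
  obtain ⟨a, A', t₀, ha, hA', ht₀, hb⟩ := mu_bounds (phiIter β (m+1)) μn (Pf m) hμpos hμdec hInt hμn
    B hB1 (fun x hx => (hB x hx).1.1.2) hPm c C hc hC (fun x hx => (hB x hx).1.1.1)
  obtain ⟨c', C', r₀, h1, h2, h3, h4⟩ := j_bounds μn (Pf m) hμpos hμdec B hB1
    (fun x hx => (hB x hx).1.1.2) hPm (2 ^ m) (by positivity) (fun x hx => (hB x hx).1.2.1)
    (fun x hx => (hB x hx).1.2.2) a A' t₀ ha hA' ht₀ hb d hd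
  refine ⟨c', C', r₀, h1, h2, h3, fun r hr hrr => ?_⟩
  rw [hj r hr]
  exact h4 r hr hrr
end

section
/- Let φ(λ) = λ/log(1 + √λ) and let u : (0,∞) → (0,∞) be a decreasing function with ∫_0^∞ e^{−λt} u(t) dt = 1/φ(λ) = log(1+√λ)/λ for all λ > 0. For an integer d ≥ 3, define g(r) = ∫_0^∞ (4πt)^{−d/2} e^{−r²/(4t)} u(t) dt. Then g(r) ≍ r^{2−d} log(1/r) as r → 0+. -/
open MeasureTheory Set Filter Topology

lemma J_aux (α b : ℝ) (hα : 1 < α) (hb : 0 < b) :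
    IntegrableOn (fun t : ℝ => t ^ (-α) * Real.exp (-(b / t))) (Ioi 0) ∧
    ∫ t in Ioi (0:ℝ), t ^ (-α) * Real.exp (-(b / t)) = (1 / b) ^ (α - 1) * Real.Gamma (α - 1) := by
  have key : EqOn (fun t : ℝ => t ^ (-α) * Real.exp (-(b / t)))
    (fun x : ℝ => (|(-1:ℝ)| * x ^ ((-1:ℝ) - 1)) •
      ((fun y : ℝ => y ^ (α - 1 - 1) * Real.exp (-(b * y))) (x ^ (-1:ℝ)))) (Ioi 0) := by
    intro x hx
    have hx : 0 < x := hx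
    simp only [smul_eq_mul, abs_neg, abs_one, one_mul]
    rw [← Real.rpow_mul hx.le, ← mul_assoc, ← Real.rpow_add hx, Real.rpow_neg_one, div_eq_mul_inv]
    congr 2
    ring
  constructor
  · rw [integrableOn_congr_fun key measurableSet_Ioi,
      integrableOn_Ioi_comp_rpow_iff
      (fun y : ℝ => y ^ (α - 1 - 1) * Real.exp (-(b * y))) (p := -1) (by norm_num)]
    have := integrableOn_rpow_mul_exp_neg_mul_rpow (s := α - 1 - 1) (p := 1) (b := b) (by linarith)
      one_pos hb
    simpa using this
  · rw [setIntegral_congr_fun measurableSet_Ioi key, integral_comp_rpow_Ioi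
      (fun y : ℝ => y ^ (α - 1 - 1) * Real.exp (-(b * y))) (p := -1) (by norm_num),
      Real.integral_rpow_mul_exp_neg_mul_Ioi (by linarith) hb]

lemma int_aux (u : ℝ → ℝ) 
    (hu : ∀ l, 0 < l → ∫ t in Ioi (0:ℝ), Real.exp (-(l * t)) * u t =
      Real.log (1 + Real.sqrt l) / l) (l : ℝ) (hl : 0 < l) :
    IntegrableOn (fun t => Real.exp (-(l * t)) * u t) (Ioi 0) := by
  by_contra h
  have h1 := hu l hl
  rw [integral_undef h] at h1
  have : 0 < Real.log (1 + Real.sqrt l) / l :=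
    div_pos (Real.log_pos (by have := Real.sqrt_pos.2 hl; linarith)) hl
  linarith

/-- `∫_0^t e^{-s/t} u ≤ t log(1+1/√t)`. -/
lemma head_aux (u : ℝ → ℝ) (hupos : ∀ t, 0 < t → 0 < u t)
    (hu : ∀ l, 0 < l → ∫ t in Ioi (0:ℝ), Real.exp (-(l * t)) * u t =
      Real.log (1 + Real.sqrt l) / l) (t : ℝ) (ht : 0 < t) :
    ∫ s in Ioc 0 t, Real.exp (-(1 / t * s)) * u s ≤ t * Real.log (1 + Real.sqrt (1 / t)) := by
  have h := setIntegral_mono_set (int_aux u hu (1/t) (by positivity))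
    (by
      filter_upwards [ae_restrict_mem measurableSet_Ioi] with s hs
      exact mul_nonneg (Real.exp_pos _).le (hupos s hs).le)
    (LE.le.eventuallyLE (Ioc_subset_Ioi_self : Ioc 0 t ⊆ Ioi 0))
  rw [hu _ (by positivity)] at h
  refine h.trans (le_of_eq ?_)
  field_simp

lemma u_upper (u : ℝ → ℝ) (hupos : ∀ t, 0 < t → 0 < u t)
    (hudec : ∀ s t, 0 < s → s ≤ t → u t ≤ u s)
    (hu : ∀ l, 0 < l → ∫ t in Ioi (0:ℝ), Real.exp (-(l * t)) * u t =
      Real.log (1 + Real.sqrt l) / l) (t : ℝ) (ht : 0 < t) :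
    u t ≤ 3 * Real.log (1 + Real.sqrt (1 / t)) := by
  have h := head_aux u hupos hu t ht
  have h2 : ∫ s in Ioc 0 t, Real.exp (-1) * u t ≤
      ∫ s in Ioc 0 t, Real.exp (-(1 / t * s)) * u s := by
    refine setIntegral_mono_on (integrableOn_const (by simp)) ((int_aux u hu (1/t) (by positivity)).mono_set
      Ioc_subset_Ioi_self) measurableSet_Ioc ?_
    intro s hs
    have : 1 / t * s ≤ 1 := by
      rw [one_div, inv_mul_le_iff₀ ht]; linarith [hs.2]
    exact mul_le_mul (Real.exp_le_exp.2 (by linarith)) (hudec s t hs.1 hs.2) (hupos t ht).le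
      (Real.exp_pos _).le
  simp [ht.le] at h2
  have h3 : t * (Real.exp (-1) * u t) ≤ t * Real.log (1 + Real.sqrt (1 / t)) := by
    refine le_trans ?_ h; simpa using h2
  have h4 := le_of_mul_le_mul_left h3 ht
  have h5 : (1:ℝ)/3 ≤ Real.exp (-1) := by
    rw [Real.exp_neg, one_div]
    exact inv_anti₀ (Real.exp_pos _) (by linarith [Real.exp_one_lt_d9])
  nlinarith [hupos t ht, mul_le_mul_of_nonneg_right h5 (hupos t ht).le]

lemma u_lower (u : ℝ → ℝ) (hupos : ∀ t, 0 < t → 0 < u t)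
    (hudec : ∀ s t, 0 < s → s ≤ t → u t ≤ u s)
    (hu : ∀ l, 0 < l → ∫ t in Ioi (0:ℝ), Real.exp (-(l * t)) * u t =
      Real.log (1 + Real.sqrt l) / l) (t : ℝ) (ht : 0 < t) :
    13 / 16 * Real.log (1 + Real.sqrt (1 / t)) - Real.log 4 ≤ u t := by
  have h := head_aux u hupos hu t ht
  set l := 1 / (16 * t) with hl
  have hlp : 0 < l := by positivity
  have hI := int_aux u hu l hlp
  have hs := setIntegral_union (f := fun s => Real.exp (-(l * s)) * u s) (μ := volume)
    (Ioc_disjoint_Ioi (le_refl t) : Disjoint (Ioc 0 t) (Ioi t)) measurableSet_Ioi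
    (hI.mono_set Ioc_subset_Ioi_self) (hI.mono_set (Ioi_subset_Ioi ht.le))
  rw [Ioc_union_Ioi_eq_Ioi ht.le, hu l hlp] at hs
  have h1 : ∫ s in Ioc 0 t, Real.exp (-(l * s)) * u s ≤
      ∫ s in Ioc 0 t, 3 * (Real.exp (-(1 / t * s)) * u s) := by
    refine setIntegral_mono_on (hI.mono_set Ioc_subset_Ioi_self)
      (((int_aux u hu (1/t) (by positivity)).mono_set
      Ioc_subset_Ioi_self).const_mul 3) measurableSet_Ioc ?_
    intro s hs
    have hs0 : 0 < s := hs.1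
    have : 1 / t * s ≤ 1 := by
      rw [one_div, inv_mul_le_iff₀ ht]; linarith [hs.2]
    rw [← mul_assoc]
    refine mul_le_mul_of_nonneg_right ?_ (hupos s hs0).le
    have a1 : Real.exp (-(l * s)) ≤ 1 := Real.exp_le_one_iff.2 (by have := mul_pos hlp hs0; linarith)
    have h5 : (1:ℝ)/3 ≤ Real.exp (-1) := by
      rw [Real.exp_neg, one_div]
      exact inv_anti₀ (Real.exp_pos _) (by linarith [Real.exp_one_lt_d9])
    have h6 : Real.exp (-1) ≤ Real.exp (-(1 / t * s)) := Real.exp_le_exp.2 (by linarith)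
    linarith
  rw [integral_const_mul] at h1
  have hE : IntegrableOn (fun s => Real.exp (-l * s)) (Ioi t) :=
    integrableOn_exp_mul_Ioi (by linarith) t
  have h2 : ∫ s in Ioi t, Real.exp (-(l * s)) * u s ≤ ∫ s in Ioi t, Real.exp (-l * s) * u t := by
    refine setIntegral_mono_on (hI.mono_set (Ioi_subset_Ioi ht.le)) (hE.mul_const _)
      measurableSet_Ioi ?_
    intro s hs
    have hs : t < s := hs
    rw [neg_mul]
    exact mul_le_mul_of_nonneg_left (hudec t s ht hs.le) (Real.exp_pos _).le
  rw [integral_mul_const, integral_exp_mul_Ioi (by linarith)] at h2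
  have h3 : -Real.exp (-l * t) / -l * u t ≤ 16 * t * u t := by
    refine mul_le_mul_of_nonneg_right ?_ (hupos t ht).le
    rw [neg_div_neg_eq, div_le_iff₀ hlp, hl]
    field_simp
    rw [Real.exp_le_one_iff]
    have := mul_pos hlp ht
    simp
    try positivity
  have hsq : Real.sqrt l = Real.sqrt (1 / t) / 4 := by
    rw [hl, show 1 / (16 * t) = (1/t) / 4^2 by field_simp; norm_num, Real.sqrt_div (by positivity),
      Real.sqrt_sq (by norm_num)]
  have h4 : Real.log (1 + Real.sqrt (1/t)) - Real.log 4 ≤ Real.log (1 + Real.sqrt l) := by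
    have := Real.sqrt_nonneg (1/t)
    rw [← Real.log_div (by positivity) (by norm_num), hsq]
    exact Real.log_le_log (by positivity) (by linarith)
  have h5 : Real.log (1 + Real.sqrt l) / l = 16 * t * Real.log (1 + Real.sqrt l) := by
    rw [hl]; field_simp
  have h6 : 16 * t * Real.log (1 + Real.sqrt l) ≤
      16 * t * (3 / 16 * Real.log (1 + Real.sqrt (1 / t)) + u t) := by
    rw [← h5, hs]; nlinarith
  have h7 := le_of_mul_le_mul_left h6 (by positivity)
  linarith

/-- For the subordinator with Laplace exponent `φ(λ) = λ/log(1+√λ)`, the Green function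
profile of the corresponding subordinate Brownian motion satisfies
`g(r) ≍ r^{2-d} log(1/r)` as `r → 0+`. -/
theorem conjugate_geometric_stable_green_asymp
    (u : ℝ → ℝ)
    (hupos : ∀ t, 0 < t → 0 < u t)
    (hudec : ∀ s t, 0 < s → s ≤ t → u t ≤ u s)
    (hu : ∀ l, 0 < l → ∫ t in Ioi (0:ℝ), Real.exp (-(l * t)) * u t =
      Real.log (1 + Real.sqrt l) / l)
    (d : ℕ) (hd : 3 ≤ d)
    (g : ℝ → ℝ)
    (hg : ∀ r, 0 < r → g r =
      ∫ t in Ioi (0:ℝ), (4 * Real.pi * t) ^ (-(d:ℝ) / 2) * Real.exp (-(r ^ 2 / (4 * t))) * u t) :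
    ∃ c C r₀ : ℝ, 0 < c ∧ c ≤ C ∧ 0 < r₀ ∧ ∀ r, 0 < r → r < r₀ →
      c * (r ^ (2 - (d:ℝ)) * Real.log (1 / r)) ≤ g r ∧
      g r ≤ C * (r ^ (2 - (d:ℝ)) * Real.log (1 / r)) := by
  have hd' : (3:ℝ) ≤ d := by exact_mod_cast hd
  have hpi := Real.pi_pos
  -- main bounds
  set F : ℝ → ℝ → ℝ := fun r t =>
    (4 * Real.pi * t) ^ (-(d:ℝ) / 2) * Real.exp (-(r ^ 2 / (4 * t))) * u t with hF
  set H : ℝ → ℝ → ℝ := fun r t => 3 * (4 * Real.pi) ^ (-(d:ℝ) / 2) *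
    (Real.log (1 / r) * (t ^ (-((d:ℝ) / 2)) * Real.exp (-((r ^ 2 / 4) / t))) +
     r * (t ^ (-(((d:ℝ) + 1) / 2)) * Real.exp (-((r ^ 2 / 4) / t)))) with hH
  have hFH : ∀ r, 0 < r → r < 1 → ∀ t ∈ Ioi (0:ℝ), F r t ≤ H r t := by
    intro r hr hr1 t ht
    have ht : 0 < t := ht
    have h1 := u_upper u hupos hudec hu t ht
    have hst := Real.sqrt_pos.2 ht
    have h2 : Real.log (1 + Real.sqrt (1 / t)) ≤ Real.log (1 / r) + r * t ^ (-(1/2:ℝ)) := by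
      have e1 : t ^ (-(1/2:ℝ)) = Real.sqrt (1 / t) := by
        rw [Real.rpow_neg ht.le, ← Real.sqrt_eq_rpow, Real.sqrt_div zero_le_one, Real.sqrt_one,
          one_div]
      rw [e1]
      have hs' := Real.sqrt_pos.2 (one_div_pos.2 ht)
      set q := Real.sqrt (1 / t)
      have : Real.log (1 + q) ≤ Real.log ((1 / r) * (1 + r * q)) := by
        refine Real.log_le_log (by positivity) ?_
        have e2 : (1 / r) * (1 + r * q) = 1 / r + q := by field_simp
        rw [e2]
        have : 1 ≤ 1 / r := by rw [le_div_iff₀ hr]; linarith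
        linarith
      rw [Real.log_mul (by positivity) (by positivity)] at this
      have h3 := Real.log_le_sub_one_of_pos (show 0 < 1 + r * q by positivity)
      linarith
    have e3 : t ^ (-(((d:ℝ) + 1) / 2)) = t ^ (-((d:ℝ) / 2)) * t ^ (-(1/2:ℝ)) := by
      rw [← Real.rpow_add ht]; congr 1; ring
    have e4 : (r ^ 2 / 4) / t = r ^ 2 / (4 * t) := by field_simp
    simp only [hF, hH]
    rw [e3, e4, Real.mul_rpow (by positivity) ht.le, neg_div]
    have h5 : u t ≤ 3 * (Real.log (1 / r) + r * t ^ (-(1/2:ℝ))) := by linarith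
    calc _ ≤ (4 * Real.pi) ^ (-((d:ℝ) / 2)) * t ^ (-((d:ℝ) / 2)) * Real.exp (-(r ^ 2 / (4 * t))) *
          (3 * (Real.log (1 / r) + r * t ^ (-(1/2:ℝ)))) := by
            exact mul_le_mul_of_nonneg_left h5 (by positivity)
      _ = _ := by ring
  have hJ1 := fun r : ℝ => fun hr : 0 < r =>
    J_aux ((d:ℝ) / 2) (r ^ 2 / 4) (by linarith) (by positivity)
  have hJ2 := fun r : ℝ => fun hr : 0 < r =>
    J_aux (((d:ℝ) + 1) / 2) (r ^ 2 / 4) (by linarith) (by positivity)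
  have hHint : ∀ r, 0 < r → IntegrableOn (H r) (Ioi 0) := fun r hr =>
    (((hJ1 r hr).1.const_mul _).add ((hJ2 r hr).1.const_mul _)).const_mul _
  have hFnn : ∀ r, ∀ t ∈ Ioi (0:ℝ), 0 ≤ F r t := by
    intro r t ht
    have ht : 0 < t := ht
    have := hupos t ht
    simp only [hF]; positivity
  have hum : AEMeasurable u (volume.restrict (Ioi 0)) :=
    aemeasurable_restrict_of_antitoneOn measurableSet_Ioi
      (fun s hs t _ hst => hudec s t hs hst)
  have hFint : ∀ r, 0 < r → r < 1 → IntegrableOn (F r) (Ioi 0) := by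
    intro r hr hr1
    refine Integrable.mono' (hHint r hr) ?_ ?_
    · refine AEMeasurable.aestronglyMeasurable (AEMeasurable.mul ?_ hum)
      exact Measurable.aemeasurable (by fun_prop)
    · filter_upwards [ae_restrict_mem measurableSet_Ioi] with t ht
      rw [Real.norm_of_nonneg (hFnn r t ht)]
      exact hFH r hr hr1 t ht
  set A := (4:ℝ) ^ ((d:ℝ) / 2 - 1) * Real.Gamma ((d:ℝ) / 2 - 1) with hA
  set B := (4:ℝ) ^ (((d:ℝ) + 1) / 2 - 1) * Real.Gamma (((d:ℝ) + 1) / 2 - 1) with hB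
  have hA0 : 0 < A := mul_pos (by positivity) (Real.Gamma_pos_of_pos (by linarith))
  have hB0 : 0 < B := mul_pos (by positivity) (Real.Gamma_pos_of_pos (by linarith))
  have hpow : ∀ r : ℝ, 0 < r → ∀ a : ℝ, (1 / (r ^ 2 / 4)) ^ a = 4 ^ a * r ^ (-(2 * a)) := by
    intro r hr a
    rw [show 1 / (r ^ 2 / 4) = 4 * r ^ (-2:ℝ) by
      rw [Real.rpow_neg hr.le]; norm_cast; field_simp, Real.mul_rpow (by norm_num) (by positivity),
      ← Real.rpow_mul hr.le]
    congr 2; ring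
  have hHval : ∀ r, 0 < r → ∫ t in Ioi (0:ℝ), H r t = 3 * (4 * Real.pi) ^ (-(d:ℝ) / 2) *
      (r ^ (2 - (d:ℝ)) * (Real.log (1 / r) * A + B)) := by
    intro r hr
    simp only [hH]
    rw [integral_const_mul, integral_add ((hJ1 r hr).1.const_mul _) ((hJ2 r hr).1.const_mul _),
      integral_const_mul, integral_const_mul, (hJ1 r hr).2, (hJ2 r hr).2, hpow r hr, hpow r hr]
    have e1 : r * r ^ (-(2 * (((d:ℝ) + 1) / 2 - 1))) = r ^ (2 - (d:ℝ)) := by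
      nth_rewrite 1 [← Real.rpow_one r]
      rw [← Real.rpow_add hr]; congr 1; ring
    have e2 : r ^ (-(2 * ((d:ℝ) / 2 - 1))) = r ^ (2 - (d:ℝ)) := by congr 1; ring
    rw [hA, hB, ← e1, e2, ← e1]
    ring
  set K := 3 * (4 * Real.pi) ^ (-(d:ℝ) / 2) with hK
  have hK0 : 0 < K := by positivity
  set c := (8 * Real.pi) ^ (-(d:ℝ) / 2) * Real.exp (-(1/4)) * (1 / 4) with hc
  have hc0 : 0 < c := by positivity
  refine ⟨c, max c (K * (A + B)), 1 / 4 ^ 10, hc0, le_max_left _ _, by positivity, ?_⟩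
  intro r hr hrr
  have hr1 : r < 1 := hrr.trans (by norm_num)
  have hlog4 : 0 < Real.log 4 := Real.log_pos (by norm_num)
  have hL : 10 * Real.log 4 ≤ Real.log (1 / r) := by
    rw [show 10 * Real.log 4 = Real.log (4 ^ 10) by rw [Real.log_pow]; norm_num]
    refine Real.log_le_log (by positivity) ?_
    rw [le_div_iff₀ hr]
    rw [lt_div_iff₀ (by positivity)] at hrr
    linarith
  have hlog41 : 1 ≤ Real.log 4 := by
    rw [Real.le_log_iff_exp_le (by norm_num)]; linarith [Real.exp_one_lt_d9]
  have hP : 0 < r ^ (2 - (d:ℝ)) := by positivity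
  rw [hg r hr]
  constructor
  · have h1 : ∫ t in Ioc (r^2) (2 * r^2), F r t ≤ ∫ t in Ioi (0:ℝ), F r t := by
      refine setIntegral_mono_set (hFint r hr hr1) ?_ ?_
      · filter_upwards [ae_restrict_mem measurableSet_Ioi] with s hs
        exact hFnn r s hs
      · exact LE.le.eventuallyLE (fun t ht => lt_trans (by positivity) ht.1)
    have hul : Real.log (1 / r) * (1 / 4) ≤ u (2 * r ^ 2) := by
      have := u_lower u hupos hudec hu (2 * r ^ 2) (by positivity)
      have h4 : Real.log (1 / r) - Real.log 4 ≤ Real.log (1 + Real.sqrt (1 / (2 * r ^ 2))) := by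
        rw [← Real.log_div (by positivity) (by norm_num)]
        refine Real.log_le_log (by positivity) ?_
        have : 1 / r / 4 ≤ Real.sqrt (1 / (2 * r ^ 2)) := by
          refine Real.le_sqrt_of_sq_le ?_
          rw [div_div, div_pow]
          refine div_le_div₀ (by norm_num) (by norm_num) (by positivity) (by nlinarith)
        linarith
      linarith
    have h2 : ∫ t in Ioc (r^2) (2 * r^2), ((8 * Real.pi * r ^ 2) ^ (-(d:ℝ) / 2) *
        Real.exp (-(1/4)) * (Real.log (1 / r) * (1/4))) ≤ ∫ t in Ioc (r^2) (2 * r^2), F r t := by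
      refine setIntegral_mono_on (integrableOn_const (by simp)) ((hFint r hr hr1).mono_set
        (fun t ht => lt_trans (by positivity) ht.1)) measurableSet_Ioc ?_
      intro t ht
      have ht0 : 0 < t := lt_trans (by positivity) ht.1
      have a1 : (8 * Real.pi * r ^ 2) ^ (-(d:ℝ) / 2) ≤ (4 * Real.pi * t) ^ (-(d:ℝ) / 2) := by
        refine Real.rpow_le_rpow_of_nonpos (by positivity) ?_ (by linarith)
        nlinarith [ht.2]
      have a2 : Real.exp (-(1/4)) ≤ Real.exp (-(r ^ 2 / (4 * t))) := by
        refine Real.exp_le_exp.2 (neg_le_neg ?_)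
        rw [div_le_div_iff₀ (by positivity) (by norm_num)]
        linarith [ht.1]
      have a3 := hul.trans (hudec t _ ht0 ht.2)
      have : 0 ≤ Real.log (1 / r) := by linarith
      exact mul_le_mul (mul_le_mul a1 a2 (by positivity) (by positivity)) a3 (by positivity)
        (by positivity)
    rw [setIntegral_const, Real.volume_real_Ioc_of_le (by nlinarith)] at h2
    refine le_trans (le_of_eq ?_) (h2.trans h1)
    rw [hc, smul_eq_mul, Real.mul_rpow (x := 8 * Real.pi) (y := r ^ 2) (by positivity) (by positivity)]
    have e1 : r ^ (2 - (d:ℝ)) = r ^ 2 * (r ^ 2) ^ (-(d:ℝ) / 2) := by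
      rw [← Real.rpow_natCast r 2, ← Real.rpow_mul hr.le, ← Real.rpow_add hr]
      congr 1; push_cast; ring
    rw [e1]; ring
  · have h1 : ∫ t in Ioi (0:ℝ), F r t ≤ ∫ t in Ioi (0:ℝ), H r t :=
      setIntegral_mono_on (hFint r hr hr1) (hHint r hr) measurableSet_Ioi (hFH r hr hr1)
    rw [hHval r hr] at h1
    refine h1.trans ?_
    have hL1 : 1 ≤ Real.log (1 / r) := by linarith
    calc _ ≤ K * (r ^ (2 - (d:ℝ)) * (Real.log (1 / r) * A + Real.log (1 / r) * B)) := by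
          have : B ≤ Real.log (1 / r) * B := by nlinarith
          gcongr
      _ = (K * (A + B)) * (r ^ (2 - (d:ℝ)) * Real.log (1 / r)) := by ring
      _ ≤ _ := mul_le_mul_of_nonneg_right (le_max_right _ _) (by positivity)
end

section
/- Assume condition (A-1) holds with some index α ∈ [0,1). Then there is a constant c > 0 such that ∫_0^r φ(t^{−2}) dt ≤ c · r · φ(r^{−2}) for every r ∈ (0,1). -/
open MeasureTheory Set Filter Topology

lemma kie_exp_bound {l t : ℝ} (hl : 0 < l) (ht : 0 < t) :
    t * Real.exp (-(l * t)) ≤ max 1 (1 / l) * min 1 t := by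
  have h1 : Real.exp (-(l * t)) ≤ 1 := Real.exp_le_one_iff.2 (by nlinarith [mul_pos hl ht])
  have h2 : t * Real.exp (-(l * t)) ≤ 1 / l := by
    rw [Real.exp_neg, le_div_iff₀ hl, ← div_eq_mul_inv, div_mul_eq_mul_div,
      div_le_one (Real.exp_pos _)]
    nlinarith [Real.add_one_le_exp (l * t)]
  rcases le_total 1 t with h | h
  · rw [min_eq_left h, mul_one]
    exact h2.trans (le_max_right _ _)
  · rw [min_eq_right h]
    have := le_max_left 1 (1 / l)
    nlinarith

lemma kie_one_sub_bound {l t : ℝ} (hl : 0 < l) (ht : 0 < t) :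
    1 - Real.exp (-(l * t)) ≤ max 1 l * min 1 t := by
  have h1 := Real.exp_pos (-(l * t))
  have h2 := Real.add_one_le_exp (-(l * t))
  rcases le_total 1 t with h | h
  · rw [min_eq_left h, mul_one]
    linarith [le_max_left 1 l]
  · rw [min_eq_right h]
    nlinarith [le_max_right 1 l]

lemma kie_one_sub_pos {l t : ℝ} (hl : 0 < l) (ht : 0 < t) :
    0 < 1 - Real.exp (-(l * t)) := by
  have : Real.exp (-(l * t)) < 1 := Real.exp_lt_one_iff.2 (by nlinarith [mul_pos hl ht])
  linarith

lemma kie_integrable (μ : ℝ → ℝ) (hμpos : ∀ t, 0 < t → 0 < μ t)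
    (hμm : AEMeasurable μ (volume.restrict (Ioi 0)))
    (hμint : IntegrableOn (fun t => min 1 t * μ t) (Ioi 0)) (l : ℝ) (hl : 0 < l) :
    IntegrableOn (fun t => (1 - Real.exp (-(l * t))) * μ t) (Ioi 0) := by
  refine Integrable.mono' (hμint.const_mul (max 1 l)) ?_ ?_
  · exact (AEMeasurable.mul (by fun_prop) hμm).aestronglyMeasurable
  · filter_upwards [ae_restrict_mem measurableSet_Ioi] with t ht
    have ht : 0 < t := ht
    rw [Real.norm_of_nonneg (mul_nonneg (kie_one_sub_pos hl ht).le (hμpos t ht).le), ← mul_assoc]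
    exact mul_le_mul_of_nonneg_right (kie_one_sub_bound hl ht) (hμpos t ht).le

lemma kie_hasDeriv (μ φ φ' : ℝ → ℝ) (hμpos : ∀ t, 0 < t → 0 < μ t)
    (hμm : AEMeasurable μ (volume.restrict (Ioi 0)))
    (hμint : IntegrableOn (fun t => min 1 t * μ t) (Ioi 0))
    (hφ : ∀ l, 0 < l → φ l = ∫ t in Ioi (0:ℝ), (1 - Real.exp (-(l * t))) * μ t)
    (hφ' : ∀ l, 0 < l → φ' l = ∫ t in Ioi (0:ℝ), t * Real.exp (-(l * t)) * μ t)
    (l : ℝ) (hl : 0 < l) : HasDerivAt φ (φ' l) l := by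
  have key := (hasDerivAt_integral_of_dominated_loc_of_deriv_le
    (μ := volume.restrict (Ioi (0:ℝ)))
    (F := fun l t => (1 - Real.exp (-(l * t))) * μ t)
    (F' := fun l t => t * Real.exp (-(l * t)) * μ t) (x₀ := l) (s := Ioi (l / 2))
    (bound := fun t => max 1 (1 / (l / 2)) * (min 1 t * μ t))
    (Ioi_mem_nhds (by linarith)) ?_ (kie_integrable μ hμpos hμm hμint l hl) ?_ ?_
    (hμint.const_mul _) ?_).2
  · rw [hφ' l hl]
    refine key.congr_of_eventuallyEq ?_
    filter_upwards [Ioi_mem_nhds hl] with x hx using hφ x hx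
  · exact Eventually.of_forall fun x =>
      (AEMeasurable.mul (by fun_prop) hμm).aestronglyMeasurable
  · exact (AEMeasurable.mul (by fun_prop) hμm).aestronglyMeasurable
  · filter_upwards [ae_restrict_mem measurableSet_Ioi] with t ht x hx
    have ht : 0 < t := ht
    have hx : l / 2 < x := hx
    have hm := (hμpos t ht).le
    rw [Real.norm_of_nonneg (by positivity), ← mul_assoc]
    refine mul_le_mul_of_nonneg_right (le_trans ?_ (kie_exp_bound (half_pos hl) ht)) hm
    gcongr
  · filter_upwards with t x hx
    have h := (((((hasDerivAt_id x).mul_const t).neg).exp).const_sub 1).mul_const (μ t)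
    refine h.congr_deriv ?_
    simp only [id, one_mul, Pi.neg_apply]
    ring

lemma kie_pos (μ φ : ℝ → ℝ) (hμpos : ∀ t, 0 < t → 0 < μ t)
    (hμm : AEMeasurable μ (volume.restrict (Ioi 0)))
    (hμint : IntegrableOn (fun t => min 1 t * μ t) (Ioi 0))
    (hφ : ∀ l, 0 < l → φ l = ∫ t in Ioi (0:ℝ), (1 - Real.exp (-(l * t))) * μ t)
    (l : ℝ) (hl : 0 < l) : 0 < φ l := by
  have hp : ∀ t, t ∈ Ioi (0:ℝ) → 0 < (1 - Real.exp (-(l * t))) * μ t := fun t ht =>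
    mul_pos (kie_one_sub_pos hl ht) (hμpos t ht)
  rw [hφ l hl, setIntegral_pos_iff_support_of_nonneg_ae]
  · have hs : Ioi (0:ℝ) ⊆ Function.support fun t => (1 - Real.exp (-(l * t))) * μ t :=
      fun t ht => (hp t ht).ne'
    rw [inter_eq_right.2 hs]
    simp
  · filter_upwards [ae_restrict_mem measurableSet_Ioi] with t ht using (hp t ht).le
  · exact kie_integrable μ hμpos hμm hμint l hl

lemma kie_mono (μ φ : ℝ → ℝ) (hμpos : ∀ t, 0 < t → 0 < μ t)
    (hμm : AEMeasurable μ (volume.restrict (Ioi 0)))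
    (hμint : IntegrableOn (fun t => min 1 t * μ t) (Ioi 0))
    (hφ : ∀ l, 0 < l → φ l = ∫ t in Ioi (0:ℝ), (1 - Real.exp (-(l * t))) * μ t)
    (a b : ℝ) (ha : 0 < a) (hab : a ≤ b) : φ a ≤ φ b := by
  have hb := ha.trans_le hab
  rw [hφ a ha, hφ b hb]
  refine setIntegral_mono_on (kie_integrable μ hμpos hμm hμint a ha)
    (kie_integrable μ hμpos hμm hμint b hb) measurableSet_Ioi fun t ht => ?_
  have ht : 0 < t := ht
  have hm := (hμpos t ht).le
  gcongr

lemma kie_doubling (α : ℝ) (φ φ' : ℝ → ℝ)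
    (hd : ∀ l, 0 < l → HasDerivAt φ (φ' l) l)
    (hpos : ∀ l, 0 < l → 0 < φ l)
    (hmono : ∀ a b, 0 < a → a ≤ b → φ a ≤ φ b)
    (hn : ∀ l, 0 < l → 0 ≤ φ' l)
    (hA1 : Tendsto (fun l => φ' (l * 4) / φ' l) atTop (𝓝 ((4:ℝ) ^ (α / 2 - 1))))
    (q : ℝ) (hq : 4 * (4:ℝ) ^ (α / 2 - 1) < q) (hq0 : 0 < q) :
    ∃ C, 0 < C ∧ ∀ l, 0 < l → φ (l * 4) ≤ q * φ l + C := by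
  have h1 := hA1.eventually (gt_mem_nhds (show (4:ℝ) ^ (α / 2 - 1) < q / 4 by linarith))
  have h2 := hA1.eventually (lt_mem_nhds (show 0 < (4:ℝ) ^ (α / 2 - 1) by positivity))
  obtain ⟨L, hL⟩ := eventually_atTop.1 (h1.and (h2.and (eventually_gt_atTop 0)))
  have hL0 : 0 < L := (hL L le_rfl).2.2
  have hg : MonotoneOn (fun l => q * φ l - φ (l * 4)) (Ici L) := by
    have hdg : ∀ x, L ≤ x →
        HasDerivAt (fun l => q * φ l - φ (l * 4)) (q * φ' x - φ' (x * 4) * 4) x := by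
      intro x hx
      have hx0 := hL0.trans_le hx
      have h4 : HasDerivAt (fun l : ℝ => l * 4) 4 x := by
        simpa using (hasDerivAt_id x).mul_const (4:ℝ)
      have h5 : HasDerivAt (fun l : ℝ => φ (l * 4)) (φ' (x * 4) * 4) x :=
        (hd (x * 4) (by positivity)).comp x h4
      exact ((hd x hx0).const_mul q).sub h5
    refine monotoneOn_of_deriv_nonneg (convex_Ici L)
      (fun x hx => (hdg x hx).continuousAt.continuousWithinAt)
      (fun x hx => (hdg x (interior_subset hx)).differentiableAt.differentiableWithinAt) ?_
    intro x hx
    have hx : L ≤ x := interior_subset hx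
    rw [(hdg x hx).deriv]
    obtain ⟨a1, a2, a3⟩ := hL x hx
    have hne : φ' x ≠ 0 := by
      intro h
      simp [h] at a2
    have hp : 0 < φ' x := lt_of_le_of_ne (hn x a3) hne.symm
    have := (div_lt_iff₀ hp).1 a1
    linarith
  refine ⟨φ (L * 4), hpos _ (by positivity), fun l hl => ?_⟩
  rcases le_total l L with h | h
  · have := hmono (l * 4) (L * 4) (by positivity) (by linarith)
    nlinarith [hpos l hl]
  · have := hg (mem_Ici.2 le_rfl) (mem_Ici.2 h) h
    simp only at this
    nlinarith [hpos L hL0]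

lemma kie_iter (φ : ℝ → ℝ) (hpos : ∀ l, 0 < l → 0 < φ l)
    (hmono : ∀ a b, 0 < a → a ≤ b → φ a ≤ φ b)
    (q C : ℝ) (hq : 1 < q) (hC : 0 < C) (h : ∀ l, 0 < l → φ (l * 4) ≤ q * φ l + C) :
    ∃ K, 0 < K ∧ ∀ (n : ℕ) (l : ℝ), 1 ≤ l → φ (l * 4 ^ n) ≤ K * q ^ n * φ l := by
  have hq1 : 0 < q - 1 := by linarith
  have h1 := hpos 1 one_pos
  have hs : ∀ (n : ℕ) (l : ℝ), 0 < l →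
      φ (l * 4 ^ n) + C / (q - 1) ≤ q ^ n * (φ l + C / (q - 1)) := by
    intro n
    induction n with
    | zero => intro l hl; simp
    | succ n ih =>
      intro l hl
      have a := h (l * 4 ^ n) (by positivity)
      have b := ih l hl
      have e : C = (q - 1) * (C / (q - 1)) := by field_simp
      rw [pow_succ, ← mul_assoc, pow_succ]
      nlinarith
  refine ⟨1 + C / (q - 1) / φ 1, by positivity, fun n l hl => ?_⟩
  have a := hs n l (by linarith)
  have b := hmono 1 l one_pos hl
  have c : 0 < C / (q - 1) := by positivity
  have d : C / (q - 1) ≤ C / (q - 1) / φ 1 * φ l := by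
    rw [div_mul_eq_mul_div, le_div_iff₀ h1]
    gcongr
  have e : 0 < q ^ n := by positivity
  nlinarith

lemma kie_point (φ : ℝ → ℝ) (hpos : ∀ l, 0 < l → 0 < φ l)
    (hmono : ∀ a b, 0 < a → a ≤ b → φ a ≤ φ b) (β K : ℝ) (hβ : 0 < β) (hK : 0 < K)
    (h : ∀ (n : ℕ) (l : ℝ), 1 ≤ l → φ (l * 4 ^ n) ≤ K * ((2:ℝ) ^ β) ^ n * φ l)
    (r t : ℝ) (ht : 0 < t) (htr : t < r) (hr : r < 1) :
    φ (t ^ (-2 : ℝ)) ≤ K * 2 ^ β * φ (r ^ (-2 : ℝ)) * r ^ β * t ^ (-β) := by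
  have hr0 := ht.trans htr
  have e2 : ∀ x : ℝ, 0 < x → x ^ (-2 : ℝ) = (x ^ 2)⁻¹ := fun x hx => by
    rw [Real.rpow_neg hx.le]; norm_num
  obtain ⟨n, hn1, hn2⟩ := exists_nat_pow_near (show 1 ≤ r / t from (one_le_div ht).2 htr.le)
    (show (1:ℝ) < 2 by norm_num)
  have hl : 1 ≤ r ^ (-2 : ℝ) := by
    rw [e2 r hr0]
    exact (one_le_inv₀ (by positivity)).2 (by nlinarith)
  have hle : t ^ (-2 : ℝ) ≤ r ^ (-2 : ℝ) * 4 ^ (n + 1) := by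
    rw [e2 r hr0, e2 t ht]
    have : (4:ℝ) ^ (n + 1) = (2 ^ (n + 1)) ^ 2 := by
      rw [← pow_mul, mul_comm, pow_mul]; norm_num
    rw [this]
    calc (t ^ 2)⁻¹ = (r ^ 2)⁻¹ * (r / t) ^ 2 := by field_simp
      _ ≤ _ := by gcongr
  have hp := hpos (r ^ (-2 : ℝ)) (by positivity)
  have hb : ((2:ℝ) ^ β) ^ n ≤ r ^ β * t ^ (-β) := by
    rw [Real.rpow_neg ht.le, ← div_eq_mul_inv, ← Real.div_rpow hr0.le ht.le, ← Real.rpow_natCast,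
      ← Real.rpow_mul (by norm_num), mul_comm, Real.rpow_mul (by norm_num), Real.rpow_natCast]
    exact Real.rpow_le_rpow (by positivity) hn1 hβ.le
  calc φ (t ^ (-2 : ℝ)) ≤ _ := hmono _ _ (by positivity) hle
    _ ≤ _ := h _ _ hl
    _ = K * 2 ^ β * φ (r ^ (-2 : ℝ)) * ((2:ℝ) ^ β) ^ n := by ring
    _ ≤ K * 2 ^ β * φ (r ^ (-2 : ℝ)) * (r ^ β * t ^ (-β)) := by gcongr
    _ = _ := by ring

/-- Under (A-1) with `α ∈ [0,1)`, there is a constant `c > 0` such that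
`∫₀^r φ(t⁻²) dt ≤ c r φ(r⁻²)` for every `r ∈ (0,1)`. -/
theorem karamata_integral_estimate
    (α : ℝ) (hα0 : 0 ≤ α) (hα1 : α < 1)
    (μ φ φ' : ℝ → ℝ)
    (hμpos : ∀ t, 0 < t → 0 < μ t)
    (hμdec : ∀ s t, 0 < s → s ≤ t → μ t ≤ μ s)
    (hμint : IntegrableOn (fun t => min 1 t * μ t) (Ioi 0))
    (hφ : ∀ l, 0 < l → φ l = ∫ t in Ioi (0:ℝ), (1 - Real.exp (-(l * t))) * μ t)
    (hφ' : ∀ l, 0 < l → φ' l = ∫ t in Ioi (0:ℝ), t * Real.exp (-(l * t)) * μ t)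
    (hA1 : ∀ x, 0 < x →
      Tendsto (fun l => φ' (l * x) / φ' l) atTop (𝓝 (x ^ (α / 2 - 1)))) :
    ∃ c : ℝ, 0 < c ∧ ∀ r, 0 < r → r < 1 →
      (∫ t in Ioo (0:ℝ) r, φ (t ^ (-2 : ℝ))) ≤ c * r * φ (r ^ (-2 : ℝ)) := by
  have hμm : AEMeasurable μ (volume.restrict (Ioi 0)) :=
    aemeasurable_restrict_of_antitoneOn measurableSet_Ioi (fun s hs t _ hst => hμdec s t hs hst)
  have hpos := kie_pos μ φ hμpos hμm hμint hφ
  have hmono := kie_mono μ φ hμpos hμm hμint hφ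
  have hd := kie_hasDeriv μ φ φ' hμpos hμm hμint hφ hφ'
  have hn : ∀ l, 0 < l → 0 ≤ φ' l := by
    intro l hl
    rw [hφ' l hl]
    refine setIntegral_nonneg measurableSet_Ioi fun t ht => ?_
    have ht : 0 < t := ht
    have := hμpos t ht
    positivity
  obtain ⟨β, hβ1, hβ2⟩ := exists_between hα1
  have hβ0 : 0 < β := by linarith
  have hq : 4 * (4:ℝ) ^ (α / 2 - 1) < 2 ^ β := by
    have : 4 * (4:ℝ) ^ (α / 2 - 1) = 2 ^ α := by
      rw [Real.rpow_sub_one (by norm_num), mul_div_cancel₀ _ (by norm_num),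
        show (4:ℝ) = 2 ^ (2:ℝ) by norm_num, ← Real.rpow_mul (by norm_num)]
      congr 1
      ring
    rw [this]
    exact Real.rpow_lt_rpow_of_exponent_lt (by norm_num) hβ1
  obtain ⟨C, hC, hdbl⟩ := kie_doubling α φ φ' hd hpos hmono hn (hA1 4 (by norm_num)) _ hq
    (by positivity)
  obtain ⟨K, hK, hit⟩ := kie_iter φ hpos hmono _ C
    (Real.one_lt_rpow (by norm_num) hβ0) hC hdbl
  have hβ3 : 0 < 1 - β := by linarith
  refine ⟨K * 2 ^ β / (1 - β), by positivity, fun r hr0 hr1 => ?_⟩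
  have hii : IntervalIntegrable (fun t : ℝ => t ^ (-β)) volume 0 r :=
    intervalIntegral.intervalIntegrable_rpow' (by linarith)
  have hint : IntegrableOn (fun t : ℝ => t ^ (-β)) (Ioo 0 r) :=
    ((intervalIntegrable_iff_integrableOn_Ioo_of_le hr0.le).1 hii)
  have hval : ∫ t in Ioo (0:ℝ) r, t ^ (-β) = r ^ (1 - β) / (1 - β) := by
    rw [← integral_Ioc_eq_integral_Ioo, ← intervalIntegral.integral_of_le hr0.le,
      integral_rpow (Or.inl (by linarith)), show -β + 1 = 1 - β by ring,
      Real.zero_rpow hβ3.ne', sub_zero]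
  calc (∫ t in Ioo (0:ℝ) r, φ (t ^ (-2 : ℝ)))
      ≤ ∫ t in Ioo (0:ℝ) r, K * 2 ^ β * φ (r ^ (-2 : ℝ)) * r ^ β * t ^ (-β) := by
        refine integral_mono_of_nonneg ?_ (hint.const_mul _) ?_
        · filter_upwards [ae_restrict_mem measurableSet_Ioo] with t ht
          exact (hpos _ (Real.rpow_pos_of_pos ht.1 _)).le
        · filter_upwards [ae_restrict_mem measurableSet_Ioo] with t ht
          exact kie_point φ hpos hmono β K hβ0 hK hit r t ht.1 ht.2 hr1
    _ = K * 2 ^ β * φ (r ^ (-2 : ℝ)) * r ^ β * (r ^ (1 - β) / (1 - β)) := by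
        rw [integral_const_mul, hval]
    _ = K * 2 ^ β * φ (r ^ (-2 : ℝ)) * (r ^ β * r ^ (1 - β)) / (1 - β) := by ring
    _ = K * 2 ^ β * φ (r ^ (-2 : ℝ)) * r / (1 - β) := by
        rw [← Real.rpow_add hr0, add_sub_cancel, Real.rpow_one]
    _ = _ := by ring
    _ ≤ _ := le_rfl
end
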